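/- (Dunford–Pettis) Let (Ω, ℱ, ℙ) be a probability space. A subset A of L^1(Ω, ℱ, ℙ) is relatively compact for the weak topology σ(L^1, L^∞) if and only if A is uniformly integrable. -/

import Mathlib

open MeasureTheory Filter
open scoped ENNReal

/-- The weak topology `σ(L^p, L^q)` on `L^p`, i.e. the topology induced by the family of
functionals `f ↦ ∫ f g dμ` for `g ∈ L^q`. -/
noncomputable def weakLpTopology {Ω : Type*} [MeasurableSpace Ω] (μ : Measure Ω)
    (p q : ℝ≥0∞) : TopologicalSpace (Lp ℝ p μ) :=
  TopologicalSpace.induced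
    (fun f : Lp ℝ p μ => (fun g : Lp ℝ q μ => ∫ ω, f ω * g ω ∂μ)) Pi.topologicalSpace

/-- `A ⊆ L^p` is relatively compact for the weak topology `σ(L^p, L^q)`. -/
noncomputable def WeaklyRelativelyCompact {Ω : Type*} [MeasurableSpace Ω] (μ : Measure Ω)
    (p q : ℝ≥0∞) (A : Set (Lp ℝ p μ)) : Prop :=
  @IsCompact _ (weakLpTopology μ p q) (@closure _ (weakLpTopology μ p q) A)

/-- A set `A ⊆ L^1` is uniformly integrable:
`sup_{f ∈ A} E[|f| · 1_{|f| > c}] → 0` as `c → ∞`. -/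
def UnifIntegrableSet {Ω : Type*} [MeasurableSpace Ω] (μ : Measure Ω)
    (A : Set (Lp ℝ 1 μ)) : Prop :=
  ∀ ε : ℝ, 0 < ε → ∃ c : ℝ, ∀ f ∈ A, ∫ ω in {ω | c < |f ω|}, |f ω| ∂μ ≤ ε


section DP
open Topology
set_option linter.unusedSectionVars false
variable {Ω : Type*} [MeasurableSpace Ω] {μ : Measure Ω} [IsProbabilityMeasure μ]

/-- the pairing -/
noncomputable def dpB (μ : Measure Ω) [IsProbabilityMeasure μ] :
    Lp ℝ 1 μ →L[ℝ] Lp ℝ ∞ μ →L[ℝ] ℝ :=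
  (ContinuousLinearMap.mul ℝ ℝ).lpPairing μ 1 ∞

lemma dpB_apply (f : Lp ℝ 1 μ) (g : Lp ℝ ∞ μ) : dpB μ f g = ∫ ω, f ω * g ω ∂μ := by
  simp [dpB, ContinuousLinearMap.lpPairing_eq_integral]

lemma dp_int (f : Lp ℝ 1 μ) : Integrable f μ := L1.integrable_coeFn f

lemma dp_norm (f : Lp ℝ 1 μ) : ‖f‖ = ∫ ω, |f ω| ∂μ := by
  simpa using L1.norm_eq_integral_norm f

lemma dp_ae_le (g : Lp ℝ ∞ μ) : ∀ᵐ ω ∂μ, |g ω| ≤ ‖g‖ := by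
  have h := ae_le_eLpNormEssSup (f := g) (μ := μ)
  filter_upwards [h] with ω hω
  rw [Lp.norm_def, eLpNorm_exponent_top, ← Real.norm_eq_abs, ← toReal_enorm]
  refine ENNReal.toReal_mono ?_ hω
  have := Lp.eLpNorm_ne_top g
  rwa [eLpNorm_exponent_top] at this

lemma dp_mul_int {f g : Ω → ℝ} (hf : Integrable f μ) (hg : AEStronglyMeasurable g μ) {C : ℝ}
    (hC : ∀ᵐ ω ∂μ, |g ω| ≤ C) : Integrable (fun ω => f ω * g ω) μ :=
  hf.mul_bdd hg hC

lemma dp_mul_le {f g : Ω → ℝ} (hf : Integrable f μ) {C : ℝ}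
    (hC : ∀ᵐ ω ∂μ, |g ω| ≤ C) : |∫ ω, f ω * g ω ∂μ| ≤ C * ∫ ω, |f ω| ∂μ := by
  rw [← integral_const_mul, ← Real.norm_eq_abs]
  refine norm_integral_le_of_norm_le (hf.abs.const_mul C) ?_
  filter_upwards [hC] with ω h
  rw [norm_mul, mul_comm]
  exact mul_le_mul_of_nonneg_right h (norm_nonneg _)

lemma dpB_le (f : Lp ℝ 1 μ) (g : Lp ℝ ∞ μ) : |dpB μ f g| ≤ ‖g‖ * ‖f‖ := by
  rw [dpB_apply, dp_norm]
  exact dp_mul_le (dp_int f) (dp_ae_le g)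

lemma dp_test (g : Ω → ℝ) (hg : Measurable g) (h1 : ∀ ω, |g ω| ≤ 1) :
    ∃ G : Lp ℝ ∞ μ, ‖G‖ ≤ 1 ∧ ∀ f : Lp ℝ 1 μ, dpB μ f G = ∫ ω, f ω * g ω ∂μ := by
  have hm : MemLp g ∞ μ := memLp_top_of_bound hg.aestronglyMeasurable 1 (Eventually.of_forall h1)
  refine ⟨hm.toLp g, ?_, fun f => ?_⟩
  · have := Lp.norm_le_of_ae_bound (f := hm.toLp g) (C := 1) zero_le_one (by
      filter_upwards [hm.coeFn_toLp] with ω h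
      rw [h]
      exact h1 ω)
    simpa using this
  · rw [dpB_apply]
    refine integral_congr_ae ?_
    filter_upwards [hm.coeFn_toLp] with ω h
    rw [h]

lemma dp_sign {D : ℕ → Set Ω} (hD : ∀ i, MeasurableSet (D i))
    (hdis : ∀ i j, i ≠ j → Disjoint (D i) (D j)) (f : ℕ → Ω → ℝ) (hf : ∀ i, Measurable (f i)) :
    ∃ g : Ω → ℝ, Measurable g ∧ (∀ ω, |g ω| ≤ 1) ∧ ∀ i, ∀ ω ∈ D i, f i ω * g ω = |f i ω| := by
  classical
  set P : Set Ω := ⋃ i, D i ∩ {ω | 0 < f i ω} with hP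
  set Q : Set Ω := ⋃ i, D i ∩ {ω | f i ω ≤ 0} with hQ
  have mP : MeasurableSet P := MeasurableSet.iUnion fun i =>
    (hD i).inter (measurableSet_lt measurable_const (hf i))
  have mQ : MeasurableSet Q := MeasurableSet.iUnion fun i =>
    (hD i).inter (measurableSet_le (hf i) measurable_const)
  refine ⟨fun ω => P.indicator 1 ω - Q.indicator 1 ω, (measurable_one.indicator mP).sub
    (measurable_one.indicator mQ), fun ω => ?_, fun i ω hω => ?_⟩
  · by_cases h1 : ω ∈ P <;> by_cases h2 : ω ∈ Q <;> simp [h1, h2]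
  · have key : ∀ j, ω ∈ D j → j = i := fun j hj => by
      by_contra hne
      exact Set.disjoint_left.1 (hdis j i hne) hj hω
    by_cases h : 0 < f i ω
    · have h1 : ω ∈ P := Set.mem_iUnion.2 ⟨i, hω, h⟩
      have h2 : ω ∉ Q := by
        rintro hq
        obtain ⟨j, hj, hj'⟩ := Set.mem_iUnion.1 hq
        rw [key j hj] at hj'
        exact absurd h (not_lt.2 hj')
      simp [h1, h2, abs_of_pos h]
    · have h1 : ω ∈ Q := Set.mem_iUnion.2 ⟨i, hω, not_lt.1 h⟩
      have h2 : ω ∉ P := by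
        rintro hq
        obtain ⟨j, hj, hj'⟩ := Set.mem_iUnion.1 hq
        rw [key j hj] at hj'
        exact h hj'
      simp [h1, h2, abs_of_nonpos (not_lt.1 h)]

lemma dp_meas (f : Lp ℝ 1 μ) : Measurable (f : Ω → ℝ) := (Lp.stronglyMeasurable f).measurable

lemma dp_norm_le (f : Lp ℝ 1 μ) {C : ℝ} (h : ∀ G : Lp ℝ ∞ μ, ‖G‖ ≤ 1 → dpB μ f G ≤ C) :
    ‖f‖ ≤ C := by
  obtain ⟨g, mg, g1, hg⟩ := dp_sign (D := fun i => if i = 0 then Set.univ else ∅)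
    (fun i => by split_ifs <;> simp)
    (fun i j hij => by
      split_ifs <;> simp_all) (fun _ => f) (fun _ => dp_meas f)
  obtain ⟨G, hG, hG'⟩ := dp_test (μ := μ) g mg g1
  have := h G hG
  rw [hG'] at this
  rw [dp_norm]
  refine le_trans (le_of_eq (integral_congr_ae (Eventually.of_forall fun ω => ?_))) this
  exact (hg 0 ω (by simp)).symm

lemma dp_set_le (f : Lp ℝ 1 μ) (S : Set Ω) : ∫ ω in S, |f ω| ∂μ ≤ ‖f‖ := by
  rw [dp_norm]
  exact setIntegral_le_integral (dp_int f).abs (Eventually.of_forall fun _ => abs_nonneg _)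

lemma dp_small (f : Lp ℝ 1 μ) {U : ℕ → Set Ω}
    (hU0 : Tendsto (fun n => μ (U n)) atTop (𝓝 0)) :
    Tendsto (fun n => ∫ ω in U n, |f ω| ∂μ) atTop (𝓝 0) :=
  (dp_int f).abs.tendsto_setIntegral_nhds_zero hU0

lemma dp_start {M : ℝ} (f : ℕ → Lp ℝ 1 μ) (hM : ∀ j, ‖f j‖ ≤ M) {U : ℕ → Set Ω}
    (hU : ∀ n, MeasurableSet (U n)) (hanti : Antitone U) {δ : ℝ} (hδ : 0 < δ) :
    ∃ n, ∀ m, n ≤ m → ∃ᶠ j in atTop, ∫ ω in U n \ U m, |f j ω| ∂μ ≤ δ := by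
  by_contra! hcon
  have step : ∀ K : ℕ, ∃ m, ∀ᶠ j in atTop, K * δ ≤ ∫ ω in U 0 \ U m, |f j ω| ∂μ := by
    intro K
    induction K with
    | zero => exact ⟨0, Eventually.of_forall fun j => by simp⟩
    | succ K ih =>
      obtain ⟨m, hm⟩ := ih
      obtain ⟨m', hmm, hm'⟩ := hcon m
      refine ⟨m', ?_⟩
      filter_upwards [hm, hm'] with j h1 h2
      have : U 0 \ U m' = (U 0 \ U m) ∪ (U m \ U m') := by
        have := hanti hmm
        have := hanti (Nat.zero_le m)
        ext x
        simp only [Set.mem_sdiff, Set.mem_union]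
        grind
      rw [this, setIntegral_union _ ((hU m).diff (hU m')) (dp_int _).abs.integrableOn
        (dp_int _).abs.integrableOn]
      · push_cast; linarith
      · exact Set.disjoint_left.2 fun x hx hy => hx.2 hy.1
  obtain ⟨K, hK⟩ := exists_nat_gt (M / δ)
  obtain ⟨m, hm⟩ := step K
  obtain ⟨j, hj⟩ := hm.exists
  have := (hj.trans (dp_set_le (f j) _)).trans (hM j)
  rw [div_lt_iff₀ hδ] at hK
  linarith

lemma dp_glide {M : ℝ} (f : ℕ → Lp ℝ 1 μ) (hM : ∀ j, ‖f j‖ ≤ M) {U : ℕ → Set Ω}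
    (hU : ∀ n, MeasurableSet (U n)) (hanti : Antitone U)
    (hU0 : Tendsto (fun n => μ (U n)) atTop (𝓝 0)) {ε : ℝ} (hε : 0 < ε)
    (hf : ∀ j, ε ≤ ∫ ω in U j, |f j ω| ∂μ) :
    ∃ (φ ψ : ℕ → ℕ) (g : ℕ → Ω → ℝ), (∀ N, N ≤ ψ N) ∧ (∀ N, Measurable (g N)) ∧
      (∀ N ω, |g N ω| ≤ 1) ∧ (∀ N ω, ω ∉ U (ψ N) → g N ω = 0) ∧
      ∀ N i, N ≤ i → ε / 2 ≤ ∫ ω, f (φ i) ω * g N ω ∂μ := by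
  obtain ⟨n, hn⟩ := dp_start f hM hU hanti (δ := ε / 6) (by positivity)
  have sel : ∀ m, ∃ j m', n ≤ m → (m ≤ j ∧ ∫ ω in U n \ U m, |f j ω| ∂μ ≤ ε / 6 ∧
      m < m' ∧ ∫ ω in U m', |f j ω| ∂μ ≤ ε / 6) := by
    intro m
    by_cases hm : n ≤ m
    · obtain ⟨j, hj, hmj⟩ := ((hn m hm).and_eventually (eventually_ge_atTop m)).exists
      obtain ⟨m', hm', hmm⟩ := (((dp_small (f j) hU0).eventually_le_const
        (show (0 : ℝ) < ε / 6 by positivity)).and (eventually_gt_atTop m)).exists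
      exact ⟨j, m', fun _ => ⟨hmj, hj, hmm, hm'⟩⟩
    · exact ⟨0, 0, fun h => absurd h hm⟩
  choose J S hS using sel
  let ψ : ℕ → ℕ := fun i => S^[i] n
  have ψs : ∀ i, ψ (i + 1) = S (ψ i) := fun i => Function.iterate_succ_apply' S i n
  have ψn : ∀ i, n ≤ ψ i := by
    intro i
    induction i with
    | zero => exact le_rfl
    | succ i ih => rw [ψs]; exact ih.trans (hS _ ih).2.2.1.le
  have ψm : StrictMono ψ := strictMono_nat_of_lt_succ fun i => by
    rw [ψs]; exact (hS _ (ψn i)).2.2.1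
  obtain ⟨g, mg, g1, hg⟩ := dp_sign (D := fun i => U (ψ i) \ U (ψ (i + 1)))
    (fun i => (hU _).diff (hU _)) (by
      have aux : ∀ i j, i < j → Disjoint (U (ψ i) \ U (ψ (i + 1))) (U (ψ j) \ U (ψ (j + 1))) := by
        intro i j hij
        exact Set.disjoint_left.2 fun x hx hy => hx.2 (hanti (ψm.monotone hij) hy.1)
      intro i j hij
      rcases lt_or_gt_of_ne hij with h | h
      · exact aux i j h
      · exact (aux j i h).symm) (fun i => f (J (ψ i))) (fun i => dp_meas _)
  have gN1 : ∀ N ω, |(U (ψ N)).indicator g ω| ≤ 1 := fun N ω => by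
    by_cases h : ω ∈ U (ψ N)
    · simpa [h] using g1 ω
    · simp [h]
  refine ⟨fun i => J (ψ i), ψ, fun N => (U (ψ N)).indicator g, fun N => ψm.le_apply,
    fun N => mg.indicator (hU _), gN1, fun N ω h => by simp [h], fun N i hNi => ?_⟩
  obtain ⟨h1, h2, h3, h4⟩ := hS _ (ψn i)
  rw [← ψs] at h3 h4
  set F := f (J (ψ i)) with hF
  have hFi := (dp_int F).abs
  have e1 : ε ≤ ∫ ω in U (ψ i), |F ω| ∂μ := (hf (J (ψ i))).trans
    (setIntegral_mono_set hFi.integrableOn (Eventually.of_forall fun _ => abs_nonneg _)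
      (Eventually.of_forall (hanti h1)))
  have i1 := hFi.indicator (hU (ψ i))
  have i2 := hFi.indicator (hU (ψ (i + 1)))
  have i3 := hFi.indicator ((hU n).diff (hU (ψ i)))
  have key : ∫ ω, ((U (ψ i)).indicator (fun ω => |F ω|) ω
      - 2 * (U (ψ (i+1))).indicator (fun ω => |F ω|) ω
      - (U n \ U (ψ i)).indicator (fun ω => |F ω|) ω) ∂μ ≤
      ∫ ω, F ω * (U (ψ N)).indicator g ω ∂μ := by
    refine integral_mono ((i1.sub (i2.const_mul 2)).sub i3)
      (dp_mul_int (dp_int F) (mg.indicator (hU _)).aestronglyMeasurable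
        (Eventually.of_forall (gN1 N))) ?_
    intro ω
    have b : -|F ω| ≤ F ω * (U (ψ N)).indicator g ω := by
      have : |F ω * (U (ψ N)).indicator g ω| ≤ |F ω| := by
        rw [abs_mul]
        exact mul_le_of_le_one_right (abs_nonneg _) (gN1 N ω)
      exact (abs_le.1 this).1
    have a0 := abs_nonneg (F ω)
    have s1 : U (ψ (i+1)) ⊆ U (ψ i) := hanti h3.le
    have s2 : U (ψ i) ⊆ U (ψ N) := hanti (ψm.monotone hNi)
    have s3 : U (ψ N) ⊆ U n := hanti (ψn N)
    dsimp only
    by_cases c1 : ω ∈ U (ψ (i+1))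
    · have c2 := s1 c1
      simp only [Set.indicator_of_mem c1, Set.indicator_of_mem c2]
      rw [Set.indicator_of_notMem (s := U n \ U (ψ i)) (fun h => h.2 c2)]
      linarith
    · rw [Set.indicator_of_notMem c1]
      by_cases c2 : ω ∈ U (ψ i)
      · have := hg i ω ⟨c2, c1⟩
        rw [Set.indicator_of_mem c2, Set.indicator_of_mem (s2 c2),
          Set.indicator_of_notMem (s := U n \ U (ψ i)) (fun h => h.2 c2)]
        linarith
      · rw [Set.indicator_of_notMem c2]
        by_cases c3 : ω ∈ U (ψ N)
        · rw [Set.indicator_of_mem (s := U n \ U (ψ i)) ⟨s3 c3, c2⟩]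
          linarith
        · rw [Set.indicator_of_notMem c3]
          have : 0 ≤ (U n \ U (ψ i)).indicator (fun ω => |F ω|) ω :=
            Set.indicator_nonneg (fun _ _ => abs_nonneg _) ω
          linarith
  have i12 : Integrable (fun ω => (U (ψ i)).indicator (fun ω => |F ω|) ω
      - 2 * (U (ψ (i+1))).indicator (fun ω => |F ω|) ω) μ := i1.sub (i2.const_mul 2)
  rw [integral_sub i12 i3, integral_sub i1 (i2.const_mul 2),
    integral_const_mul, integral_indicator (hU _), integral_indicator (hU _),
    integral_indicator ((hU _).diff (hU _))] at key
  linarith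

lemma dp_bdd {A : Set (Lp ℝ 1 μ)}
    (hA : ∀ u : Ultrafilter (Lp ℝ 1 μ), A ∈ u →
      ∃ f, ∀ g, Tendsto (fun f' => dpB μ f' g) u (𝓝 (dpB μ f g))) :
    ∃ M, ∀ f ∈ A, ‖f‖ ≤ M := by
  have : ∀ g : Lp ℝ ∞ μ, ∃ C, ∀ f : A, ‖dpB μ f g‖ ≤ C := by
    intro g
    by_contra! hcon
    choose f hf using fun n : ℕ => hcon n
    obtain ⟨f0, h0⟩ := hA ((hyperfilter ℕ).map fun n => (f n : Lp ℝ 1 μ))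
      (Ultrafilter.mem_map.2 (Filter.univ_mem' fun n => (f n).2))
    have h1 := (h0 g).norm
    rw [Ultrafilter.coe_map, tendsto_map'_iff] at h1
    have h2 : Tendsto (fun n => ‖dpB μ (f n : Lp ℝ 1 μ) g‖) (hyperfilter ℕ : Filter ℕ) atTop :=
      tendsto_atTop_mono (fun n => (hf n).le)
        (tendsto_natCast_atTop_atTop.mono_left Nat.hyperfilter_le_atTop)
    exact not_tendsto_nhds_of_tendsto_atTop h2 _ h1
  obtain ⟨C, hC⟩ := banach_steinhaus this
  refine ⟨C, fun f hf => dp_norm_le f fun G hG => ?_⟩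
  calc dpB μ f G ≤ ‖dpB μ f G‖ := le_abs_self _
    _ ≤ ‖dpB μ f‖ * ‖G‖ := ContinuousLinearMap.le_opNorm _ _
    _ ≤ C * 1 := mul_le_mul (hC ⟨f, hf⟩) hG (norm_nonneg _) ((norm_nonneg _).trans (hC ⟨f, hf⟩))
    _ = C := mul_one C

lemma dp_forward {A : Set (Lp ℝ 1 μ)}
    (hA : ∀ u : Ultrafilter (Lp ℝ 1 μ), A ∈ u →
      ∃ f, ∀ g, Tendsto (fun f' => dpB μ f' g) u (𝓝 (dpB μ f g))) :
    UnifIntegrableSet μ A := by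
  obtain ⟨M, hM⟩ := dp_bdd hA
  by_contra hcon
  unfold UnifIntegrableSet at hcon
  push Not at hcon
  obtain ⟨ε, hε, hc⟩ := hcon
  choose f hfA hf using fun n : ℕ => hc (2 ^ n)
  let E : ℕ → Set Ω := fun n => {ω | (2 : ℝ) ^ n < |f n ω|}
  have mE : ∀ n, MeasurableSet (E n) := fun n =>
    measurableSet_lt measurable_const (dp_meas (f n)).abs
  have hE : ∀ n, μ (E n) ≤ ENNReal.ofReal (M * (1/2) ^ n) := by
    intro n
    have h1 := mul_meas_ge_le_integral_of_nonneg (μ := μ) (f := fun ω => |f n ω|)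
      (Eventually.of_forall fun _ => abs_nonneg _) (dp_int (f n)).abs (2 ^ n)
    rw [← dp_norm] at h1
    have h2 : μ.real (E n) ≤ μ.real {ω | (2 : ℝ) ^ n ≤ |f n ω|} :=
      measureReal_mono fun ω (h : (2 : ℝ) ^ n < _) => h.le
    have h3 : (0 : ℝ) < 2 ^ n := by positivity
    rw [← ofReal_measureReal]
    apply ENNReal.ofReal_le_ofReal
    rw [one_div, inv_pow, ← div_eq_mul_inv, le_div_iff₀ h3]
    have := hM _ (hfA n)
    nlinarith
  have hsum : ∑' n, μ (E n) ≠ ∞ := by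
    refine ne_top_of_le_ne_top ?_ (ENNReal.tsum_le_tsum hE)
    have hM0 : 0 ≤ M := (norm_nonneg _).trans (hM _ (hfA 0))
    rw [← ENNReal.ofReal_tsum_of_nonneg (fun n => by positivity)
      (summable_geometric_two.mul_left M)]
    exact ENNReal.ofReal_ne_top
  let U : ℕ → Set Ω := fun n => ⋃ k, E (k + n)
  have hU : ∀ n, MeasurableSet (U n) := fun n => MeasurableSet.iUnion fun k => mE _
  have hanti : Antitone U := by
    intro a b hab
    refine Set.iUnion_subset fun k => ?_
    have : k + b = (k + b - a) + a := by omega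
    rw [this]
    exact Set.subset_iUnion (fun k => E (k + a)) (k + b - a)
  have hU0 : Tendsto (fun n => μ (U n)) atTop (𝓝 0) :=
    tendsto_of_tendsto_of_tendsto_of_le_of_le tendsto_const_nhds
      (ENNReal.tendsto_sum_nat_add (fun n => μ (E n)) hsum) (fun _ => zero_le)
      (fun n => measure_iUnion_le _)
  have hfU : ∀ j, ε ≤ ∫ ω in U j, |f j ω| ∂μ := fun j => (hf j).le.trans
    (setIntegral_mono_set (dp_int (f j)).abs.integrableOn
      (Eventually.of_forall fun _ => abs_nonneg _)
      (Eventually.of_forall (by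
        intro ω hω
        refine Set.mem_iUnion.2 ⟨0, ?_⟩
        rw [zero_add]
        exact hω)))
  obtain ⟨φ, ψ, g, hψ, mg, g1, g0, hg⟩ :=
    dp_glide f (fun j => hM _ (hfA j)) hU hanti hU0 hε hfU
  obtain ⟨f0, h0⟩ := hA ((hyperfilter ℕ).map fun n => f (φ n)) (Ultrafilter.mem_map.2
    (Filter.univ_mem' fun n => hfA _))
  have big : ∀ N, ε / 2 ≤ ∫ ω in U (ψ N), |f0 ω| ∂μ := by
    intro N
    obtain ⟨G, hG, hG'⟩ := dp_test (μ := μ) (g N) (mg N) (g1 N)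
    have h1 := h0 G
    rw [Ultrafilter.coe_map, tendsto_map'_iff] at h1
    have h2 : ε / 2 ≤ dpB μ f0 G := by
      refine ge_of_tendsto h1 ?_
      have := Nat.hyperfilter_le_atTop (eventually_ge_atTop N)
      filter_upwards [this] with i hi
      simp only [Function.comp, hG']
      exact hg N i hi
    refine h2.trans ?_
    rw [hG', ← integral_indicator (hU _)]
    refine integral_mono (dp_mul_int (dp_int _) (mg N).aestronglyMeasurable
      (Eventually.of_forall (g1 N))) ((dp_int f0).abs.indicator (hU _)) fun ω => ?_
    by_cases h : ω ∈ U (ψ N)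
    · dsimp only
      rw [Set.indicator_of_mem h]
      refine (le_abs_self _).trans ?_
      rw [abs_mul]
      exact mul_le_of_le_one_right (abs_nonneg _) (g1 N ω)
    · simp [h, g0 N ω h]
  have lim := (dp_small f0 hU0).comp (tendsto_atTop_mono hψ tendsto_id)
  have := ge_of_tendsto lim (Eventually.of_forall big)
  linarith

/-- truncation -/
noncomputable def dpTr (c : ℝ) (f : Ω → ℝ) : Ω → ℝ := {ω | |f ω| ≤ c}.indicator f

lemma dpTr_le (c : ℝ) (f : Ω → ℝ) (ω : Ω) : |dpTr c f ω| ≤ |c| := by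
  unfold dpTr
  by_cases h : ω ∈ {ω | |f ω| ≤ c}
  · rw [Set.indicator_of_mem h]
    exact le_trans h (le_abs_self c)
  · rw [Set.indicator_of_notMem h]
    simp

lemma dpTr_meas (c : ℝ) (f : Lp ℝ 1 μ) : Measurable (dpTr c f) :=
  (dp_meas f).indicator (measurableSet_le (dp_meas f).abs measurable_const)

lemma dpTr_memLp (c : ℝ) (f : Lp ℝ 1 μ) (p : ℝ≥0∞) : MemLp (dpTr c f) p μ :=
  MemLp.of_bound (dpTr_meas c f).aestronglyMeasurable |c| (Eventually.of_forall (dpTr_le c f))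

lemma dp_trunc_lim (w : Ultrafilter (Lp ℝ 1 μ)) (c : ℝ) :
    ∃ h : Lp ℝ 1 μ, ∀ g : Lp ℝ ∞ μ,
      Tendsto (fun f : Lp ℝ 1 μ => ∫ ω, dpTr c f ω * g ω ∂μ) w (𝓝 (dpB μ h g)) := by
  let t : Lp ℝ 1 μ → Lp ℝ 2 μ := fun f => (dpTr_memLp c f 2).toLp _
  have ht : ∀ f, ‖t f‖ ≤ |c| := by
    intro f
    have := Lp.norm_le_of_ae_bound (f := t f) (C := |c|) (abs_nonneg c) (by
      filter_upwards [(dpTr_memLp c f 2).coeFn_toLp] with ω h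
      rw [h]
      exact dpTr_le c f ω)
    simpa [measureUnivNNReal] using this
  let S : Lp ℝ 1 μ → WeakDual ℝ (Lp ℝ 2 μ) := fun f =>
    StrongDual.toWeakDual (InnerProductSpace.toDual ℝ _ (t f))
  have hcpt := WeakDual.isCompact_closedBall (𝕜 := ℝ) (E := Lp ℝ 2 μ) 0 |c|
  obtain ⟨S0, -, hS0⟩ := hcpt.ultrafilter_le_nhds (w.map S) (by
    rw [le_principal_iff]
    refine Ultrafilter.mem_map.2 (Filter.univ_mem' fun f => ?_)
    simp [S, ht f])
  set h2 : Lp ℝ 2 μ := (InnerProductSpace.toDual ℝ _).symm (WeakDual.toStrongDual S0) with hh2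
  have m1 : MemLp h2 1 μ := (Lp.memLp h2).mono_exponent one_le_two
  refine ⟨m1.toLp _, fun g => ?_⟩
  have mg : MemLp g 2 μ := (Lp.memLp g).mono_exponent le_top
  have hev : Tendsto (fun f => S f (mg.toLp _)) w (𝓝 (S0 (mg.toLp _))) :=
    ((WeakDual.eval_continuous (mg.toLp _)).tendsto S0).comp hS0
  have e1 : S0 (mg.toLp _) = dpB μ (m1.toLp _) g := by
    have : inner ℝ h2 (mg.toLp _) = S0 (mg.toLp _) := InnerProductSpace.toDual_symm_apply
    rw [← this, L2.inner_def, dpB_apply]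
    refine integral_congr_ae ?_
    filter_upwards [m1.coeFn_toLp, mg.coeFn_toLp] with ω a b
    rw [a, b]
    simp [mul_comm]
  have e2 : ∀ f, S f (mg.toLp _) = ∫ ω, dpTr c f ω * g ω ∂μ := by
    intro f
    have : S f (mg.toLp _) = inner ℝ (t f) (mg.toLp _) := InnerProductSpace.toDual_apply_apply
    rw [this, L2.inner_def]
    refine integral_congr_ae ?_
    filter_upwards [(dpTr_memLp c f 2).coeFn_toLp, mg.coeFn_toLp] with ω a b
    rw [a, b]
    simp [mul_comm]
  rw [← e1]
  simpa only [e2] using hev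

lemma dp_approx {A : Set (Lp ℝ 1 μ)} (hA : UnifIntegrableSet μ A) (w : Ultrafilter (Lp ℝ 1 μ))
    (hw : A ∈ w) (T : Lp ℝ ∞ μ → ℝ) (hT : ∀ g, Tendsto (fun f => dpB μ f g) w (𝓝 (T g)))
    {ε : ℝ} (hε : 0 < ε) : ∃ h : Lp ℝ 1 μ, ∀ g, |T g - dpB μ h g| ≤ ‖g‖ * ε := by
  obtain ⟨c, hc⟩ := hA ε hε
  obtain ⟨h, hh⟩ := dp_trunc_lim w c
  refine ⟨h, fun g => ?_⟩
  refine le_of_tendsto ((hT g).sub (hh g)).abs ?_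
  filter_upwards [hw] with f hf
  have it : Integrable (dpTr c f) μ := (dpTr_memLp c f 1).integrable le_rfl
  have hg := (Lp.aestronglyMeasurable g)
  rw [dpB_apply, ← integral_sub (dp_mul_int (dp_int f) hg (dp_ae_le g))
    (dp_mul_int it hg (dp_ae_le g))]
  simp_rw [← sub_mul]
  refine (dp_mul_le ((dp_int f).sub it) (dp_ae_le g)).trans ?_
  refine mul_le_mul_of_nonneg_left (le_trans (le_of_eq ?_) (hc f hf)) (norm_nonneg _)
  rw [← integral_indicator (measurableSet_lt measurable_const (dp_meas f).abs)]
  refine integral_congr_ae (Eventually.of_forall fun ω => ?_)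
  by_cases h : |f ω| ≤ c
  · simp [dpTr, h]
  · simp [dpTr, h, not_le.1 h]

lemma dp_repr {A : Set (Lp ℝ 1 μ)} (hA : UnifIntegrableSet μ A) (w : Ultrafilter (Lp ℝ 1 μ))
    (hw : A ∈ w) (T : Lp ℝ ∞ μ → ℝ) (hT : ∀ g, Tendsto (fun f => dpB μ f g) w (𝓝 (T g))) :
    ∃ f : Lp ℝ 1 μ, ∀ g, dpB μ f g = T g := by
  choose h hh using fun n : ℕ => dp_approx hA w hw T hT (ε := (1/2) ^ n) (by positivity)
  have hc : CauchySeq h := by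
    refine cauchySeq_of_le_geometric_two (C := 4) fun n => ?_
    rw [dist_eq_norm]
    refine dp_norm_le _ fun G hG => ?_
    rw [map_sub, _root_.sub_apply]
    have a := abs_le.1 (hh n G)
    have b := abs_le.1 (hh (n + 1) G)
    have p : (0 : ℝ) < (1/2) ^ n := by positivity
    have q : (4 : ℝ) / 2 / 2 ^ n = 2 * (1/2) ^ n := by
      rw [one_div, inv_pow]; ring
    have r : ((1 : ℝ)/2) ^ (n+1) ≤ (1/2) ^ n := by rw [pow_succ]; linarith
    have a' : ‖G‖ * (1/2) ^ n ≤ (1/2) ^ n := mul_le_of_le_one_left p.le hG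
    have b' : ‖G‖ * (1/2) ^ (n+1) ≤ (1/2) ^ (n+1) := mul_le_of_le_one_left (by positivity) hG
    rw [q]
    linarith [a.1, b.2, a.2, b.1]
  obtain ⟨f, hf⟩ := cauchySeq_tendsto_of_complete hc
  refine ⟨f, fun g => ?_⟩
  have l1 : Tendsto (fun n => dpB μ (h n) g) atTop (𝓝 (dpB μ f g)) :=
    (((dpB μ).flip g).continuous.tendsto f).comp hf
  have l2 : Tendsto (fun n => dpB μ (h n) g) atTop (𝓝 (T g)) := by
    rw [tendsto_iff_dist_tendsto_zero]
    refine squeeze_zero (fun _ => dist_nonneg) (fun n => ?_)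
      (by simpa using (tendsto_pow_atTop_nhds_zero_of_lt_one (r := (1/2 : ℝ)) (by norm_num)
        (by norm_num)).const_mul ‖g‖)
    rw [dist_comm, Real.dist_eq]
    simpa using hh n g
  exact tendsto_nhds_unique l1 l2

lemma dp_bdd_of_ui {A : Set (Lp ℝ 1 μ)} (hA : UnifIntegrableSet μ A) :
    ∃ M, ∀ f ∈ A, ‖f‖ ≤ M := by
  obtain ⟨c, hc⟩ := hA 1 one_pos
  refine ⟨|c| + 1, fun f hf => ?_⟩
  have mS : MeasurableSet {ω | c < |f ω|} := measurableSet_lt measurable_const (dp_meas f).abs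
  have := hc f hf
  rw [← integral_indicator mS] at this
  calc ‖f‖ = ∫ ω, |f ω| ∂μ := dp_norm f
    _ ≤ ∫ ω, (|c| + {ω | c < |f ω|}.indicator (fun ω => |f ω|) ω) ∂μ := by
      refine integral_mono (dp_int f).abs
        ((integrable_const _).add ((dp_int f).abs.indicator mS)) fun ω => ?_
      dsimp only
      by_cases h : ω ∈ {ω | c < |f ω|}
      · rw [Set.indicator_of_mem h]; linarith [abs_nonneg c]
      · rw [Set.indicator_of_notMem h]
        have : |f ω| ≤ c := not_lt.1 h
        linarith [le_abs_self c]
    _ = |c| + ∫ ω, {ω | c < |f ω|}.indicator (fun ω => |f ω|) ω ∂μ := by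
      rw [integral_add (integrable_const _) ((dp_int f).abs.indicator mS)]
      simp
    _ ≤ |c| + 1 := by linarith

/-- the embedding -/
noncomputable def dpPhi (μ : Measure Ω) (f : Lp ℝ 1 μ) : Lp ℝ ∞ μ → ℝ :=
  fun g => ∫ ω, f ω * g ω ∂μ

lemma dp_ind : @IsInducing _ _ (weakLpTopology μ 1 ∞) _ (dpPhi μ) :=
  @IsInducing.mk _ _ (weakLpTopology μ 1 ∞) _ _ rfl

lemma dp_range {A : Set (Lp ℝ 1 μ)} (hA : UnifIntegrableSet μ A) :
    closure (dpPhi μ '' A) ⊆ Set.range (dpPhi μ) := by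
  intro T hT
  have hne : (comap (dpPhi μ) (𝓝 T) ⊓ 𝓟 A).NeBot := by
    rw [mem_closure_iff_clusterPt, ClusterPt, ← map_principal] at hT
    rw [← map_neBot_iff (dpPhi μ), Filter.push_pull']
    exact hT
  have hle := Ultrafilter.of_le (comap (dpPhi μ) (𝓝 T) ⊓ 𝓟 A)
  set w := Ultrafilter.of (comap (dpPhi μ) (𝓝 T) ⊓ 𝓟 A)
  have h1 : Tendsto (dpPhi μ) w (𝓝 T) := tendsto_iff_comap.2 (hle.trans inf_le_left)
  have h2 : A ∈ w := le_principal_iff.1 (hle.trans inf_le_right)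
  obtain ⟨f, hf⟩ := dp_repr hA w h2 T fun g => by
    have := (tendsto_pi_nhds.1 h1) g
    simpa only [dpPhi, ← dpB_apply] using this
  exact ⟨f, funext fun g => by rw [← hf, dpB_apply]; rfl⟩

lemma dp_compact {A : Set (Lp ℝ 1 μ)} (hA : UnifIntegrableSet μ A) :
    IsCompact (closure (dpPhi μ '' A)) := by
  obtain ⟨M, hM⟩ := dp_bdd_of_ui hA
  have hK : IsCompact (Set.univ.pi fun g : Lp ℝ ∞ μ => Set.Icc (-(‖g‖ * M)) (‖g‖ * M)) :=
    isCompact_univ_pi fun _ => isCompact_Icc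
  refine hK.of_isClosed_subset isClosed_closure (closure_minimal ?_ hK.isClosed)
  rintro _ ⟨f, hf, rfl⟩ g -
  have := (dpB_le f g).trans (mul_le_mul_of_nonneg_left (hM f hf) (norm_nonneg g))
  rw [dpB_apply] at this
  exact abs_le.1 this

lemma dp_top1 {X Y : Type*} (t : TopologicalSpace X) [TopologicalSpace Y] {Φ : X → Y}
    (h : IsInducing Φ) {A : Set X} (hA : IsCompact (closure A)) (u : Ultrafilter X) (hu : A ∈ u) :
    ∃ x, Tendsto Φ u (𝓝 (Φ x)) := by
  obtain ⟨f, -, hf⟩ := hA.ultrafilter_le_nhds u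
    (le_principal_iff.2 (mem_of_superset hu subset_closure))
  exact ⟨f, (h.continuous.tendsto f).mono_left hf⟩

lemma dp_top2 {X Y : Type*} (t : TopologicalSpace X) [TopologicalSpace Y] {Φ : X → Y}
    (h : IsInducing Φ) {A : Set X} (hr : closure (Φ '' A) ⊆ Set.range Φ)
    (hc : IsCompact (closure (Φ '' A))) : IsCompact (closure A) := by
  rw [h.closure_eq_preimage_closure_image, h.isCompact_iff, Set.image_preimage_eq_of_subset hr]
  exact hc

end DP

/-- **Dunford–Pettis.** A subset `A` of `L^1` over a probability space is relatively compact
for the weak topology `σ(L^1, L^∞)` iff it is uniformly integrable. -/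
theorem dunford_pettis
    {Ω : Type*} [MeasurableSpace Ω] (μ : Measure Ω) [IsProbabilityMeasure μ]
    (A : Set (Lp ℝ 1 μ)) :
    WeaklyRelativelyCompact μ 1 ∞ A ↔ UnifIntegrableSet μ A := by
  constructor
  · intro h
    refine dp_forward fun u hu => ?_
    obtain ⟨f, hf⟩ := dp_top1 (weakLpTopology μ 1 ∞) dp_ind h u hu
    refine ⟨f, fun g => ?_⟩
    have := (tendsto_pi_nhds.1 hf) g
    simpa only [dpPhi, ← dpB_apply] using this
  · intro h
    exact dp_top2 (weakLpTopology μ 1 ∞) dp_ind (dp_range h) (dp_compact h)
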